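/- arXiv:1504.06105 — 2 statements merged into one kernel-verified Lean document; each statement's English description precedes it below -/
import Mathlib

section
/- For all tuples w̄, v̄ of words of the same length with typ_C(w̄) = typ_C(v̄), there exists a tuple ū of the same length such that w̄ ≼* ū and v̄ ≼* ū. -/
/-!
The upper bound is a stretched copy of `v`: after every letter that completes a prefix outside `C`,
insert `N` zeros, where `N` bounds the lengths of all words in `MCAT C w` and `MCAT C v`. Words that
branch at a prefix `p` still branch, with the same two letters, at the stretched `p`, so the
stretched tuple has the type of `v`; constants are fixed because `C` is prefix closed.

Let `h` be an isomorphism from `MCAT C w` onto `MCAT C v`, and `d` a proper prefix of `e` in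
`MCAT C w`. If `h e` is a constant, then so is `h d`, and neither word is moved by `h` or by the
stretching. Otherwise the stretched `h e` has the stretched `h d` as a prefix, followed by at least
`N ≥ |e| - |d|` more letters. Taking for `h` the given isomorphism handles `w`; by symmetry of the
choice of `N`, the identity of `MCAT C v` handles `v`.
-/

namespace CLTL

/-- A word is a finite sequence of rationals. -/
abbrev Word := List ℚ

/-- Lexicographic order on lists over a linear order: `w ⊑ v` iff `w` is a prefix of `v`,
or they branch at some position with the letter of `w` smaller. -/
def lexLe {α : Type*} [LinearOrder α] (w v : List α) : Prop :=
  w <+: v ∨ ∃ (p : List α) (a b : α), a < b ∧ (p ++ [a]) <+: w ∧ (p ++ [b]) <+: v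

/-- Longest common prefix of two lists. -/
def lcp {α : Type*} [DecidableEq α] : List α → List α → List α
  | a :: w, b :: v => if a = b then a :: lcp w v else []
  | _, _ => []

/-- Iterated longest common prefix of a nonempty list of words. -/
def listLCP : List Word → Word
  | [] => []
  | [x] => x
  | x :: xs => lcp x (listLCP xs)

/-- Insertion of an `m`-gap at `u`. -/
def iota (u : Word) (m : ℕ) (w : Word) : Word :=
  if u <+: w then u ++ List.replicate m 0 ++ w.drop u.length else w

/-- The maximal common ancestor tree of a tuple `w` together with constants `C`:
`{ε}` together with all iterated longest common prefixes of nonempty subsets of entries. -/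
def MCAT (C : List Word) {k : ℕ} (w : Fin k → Word) : Set Word :=
  insert [] { x | ∃ I : Finset (Fin (k + C.length)),
    I.Nonempty ∧ x = listLCP (I.toList.map (Fin.append w C.get)) }

/-- `h` is the induced isomorphism witnessing `typ_C(w) = typ_C(v)`. -/
def IsInducedIso (C : List Word) {k : ℕ} (w v : Fin k → Word) (h : Word → Word) : Prop :=
  Set.BijOn h (MCAT C w) (MCAT C v) ∧
  (∀ x ∈ MCAT C w, ∀ y ∈ MCAT C w,
    (x <+: y ↔ h x <+: h y) ∧ (lexLe x y ↔ lexLe (h x) (h y))) ∧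
  (∀ c ∈ C, h c = c) ∧
  (∀ i : Fin k, h (w i) = v i)

/-- `typ_C(w) = typ_C(v)`. -/
def SameTyp (C : List Word) {k : ℕ} (w v : Fin k → Word) : Prop :=
  ∃ h : Word → Word, IsInducedIso C w v h

/-- The stretching condition on an isomorphism `h` of `MCAT_C(w)`:
`|h e| - |h d| ≥ |e| - |d|` whenever `d` is a proper prefix of `e`. -/
def StretchCond (C : List Word) {k : ℕ} (w : Fin k → Word) (h : Word → Word) : Prop :=
  ∀ d ∈ MCAT C w, ∀ e ∈ MCAT C w, d <+: e → d ≠ e →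
    e.length + (h d).length ≤ (h e).length + d.length

/-- `w ≼* v` for tuples of words. -/
def Stretch (C : List Word) {k : ℕ} (w v : Fin k → Word) : Prop :=
  ∃ h : Word → Word, IsInducedIso C w v h ∧ StretchCond C w h

/-- `≼*` on configurations. -/
def ConfigLe (C : List Word) {Q : Type*} {n : ℕ}
    (c d : Q × (Fin n → Word)) : Prop :=
  c.1 = d.1 ∧ Stretch C c.2 d.2

/-- A transition relation is type-invariant. -/
def TypeInvariant (C : List Word) {Q : Type*} {n : ℕ}
    (step : (Q × (Fin n → Word)) → (Q × (Fin n → Word)) → Prop) : Prop :=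
  ∀ (q p : Q) (w v w' v' : Fin n → Word),
    step (q, w) (p, v) → SameTyp C (Fin.append w v) (Fin.append w' v') →
      step (q, w') (p, v')

/-- Finite runs, indexed by `Fin (N+1)`. -/
def IsFinRun {Q : Type*} {n : ℕ}
    (step : (Q × (Fin n → Word)) → (Q × (Fin n → Word)) → Prop)
    {N : ℕ} (r : Fin (N + 1) → Q × (Fin n → Word)) : Prop :=
  ∀ i : Fin N, step (r i.castSucc) (r i.succ)

/-- Infinite runs. -/
def IsInfRun {Q : Type*} {n : ℕ}
    (step : (Q × (Fin n → Word)) → (Q × (Fin n → Word)) → Prop)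
    (r : ℕ → Q × (Fin n → Word)) : Prop :=
  ∀ i : ℕ, step (r i) (r (i + 1))

/-- The pair `(w, v)` (of tuples of equal type) is contracting. -/
def ContractingPair (C : List Word) {k : ℕ} (w v : Fin k → Word) : Prop :=
  ∃ h : Word → Word, IsInducedIso C w v h ∧
    ((∃ d ∈ MCAT C w, h d <+: d ∧ h d ≠ d) ∨
     (∃ d ∈ MCAT C w, ∃ e ∈ MCAT C w,
        d <+: e ∧ d ≠ e ∧ h e = e ∧ d <+: h d ∧ d ≠ h d))

/-- A set of words `T` has `n`-gaps above `B`. -/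
def HasGaps (n : ℕ) (T B : Set Word) : Prop :=
  ∀ d ∈ T, ∀ e ∈ T, d <+: e → d ≠ e → (∀ b ∈ B, ¬ e <+: b) → n + d.length < e.length

section Lists

variable {α : Type*}

theorem lexLe_cons_cons [LinearOrder α] {a b : α} {x y : List α} :
    lexLe (a :: x) (b :: y) ↔ a < b ∨ a = b ∧ lexLe x y := by
  constructor
  · rintro (hpre | ⟨_ | ⟨e, p⟩, c, d, hcd, hx, hy⟩)
    · obtain ⟨hab, hxy⟩ := List.cons_prefix_cons.1 hpre
      exact Or.inr ⟨hab, Or.inl hxy⟩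
    · obtain ⟨rfl, -⟩ := List.cons_prefix_cons.1 hx
      obtain ⟨rfl, -⟩ := List.cons_prefix_cons.1 hy
      exact Or.inl hcd
    · obtain ⟨rfl, hpx⟩ := List.cons_prefix_cons.1 hx
      obtain ⟨rfl, hpy⟩ := List.cons_prefix_cons.1 hy
      exact Or.inr ⟨rfl, Or.inr ⟨p, c, d, hcd, hpx, hpy⟩⟩
  · rintro (hab | ⟨rfl, hpre | ⟨p, c, d, hcd, hx, hy⟩⟩)
    · exact Or.inr ⟨[], a, b, hab, by simp, by simp⟩
    · exact Or.inl (List.cons_prefix_cons.2 ⟨rfl, hpre⟩)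
    · exact Or.inr ⟨a :: p, c, d, hcd, List.cons_prefix_cons.2 ⟨rfl, hx⟩,
        List.cons_prefix_cons.2 ⟨rfl, hy⟩⟩

theorem lexLe_append_left_iff [LinearOrder α] (r : List α) {x y : List α} :
    lexLe (r ++ x) (r ++ y) ↔ lexLe x y := by
  induction r with
  | nil => rfl
  | cons a r ih => simp [lexLe_cons_cons, ih]

theorem lcp_append_left [DecidableEq α] (r x y : List α) :
    lcp (r ++ x) (r ++ y) = r ++ lcp x y := by
  induction r with
  | nil => rfl
  | cons a r ih => simp [lcp, ih]

/-- `insertGaps gap x` inserts the list `gap q` after each nonempty prefix `q` of `x`. It serves to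
stretch a word at many places at once, where `iota` inserts zeros at a single one. The recursion
absorbs the letters already read into the function `gap`. -/
def insertGaps : (List α → List α) → List α → List α
  | _, [] => []
  | gap, a :: x => a :: (gap [a] ++ insertGaps (fun q => gap (a :: q)) x)

theorem insertGaps_append (gap : List α → List α) (x y : List α) :
    insertGaps gap (x ++ y) = insertGaps gap x ++ insertGaps (fun q => gap (x ++ q)) y := by
  induction x generalizing gap with
  | nil => rfl
  | cons a x ih => simp [insertGaps, ih]

theorem insertGaps_eq_self {gap : List α → List α} {x : List α}
    (hgap : ∀ q, q ≠ [] → q <+: x → gap q = []) : insertGaps gap x = x := by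
  induction x generalizing gap with
  | nil => rfl
  | cons a x ih =>
    have head_gap : gap [a] = [] := hgap [a] (by simp) (by simp)
    have tail_eq : insertGaps (fun q => gap (a :: q)) x = x :=
      ih fun q _ hq => hgap (a :: q) (by simp) (by simpa using hq)
    simp [insertGaps, head_gap, tail_eq]

theorem gap_suffix_insertGaps (gap : List α → List α) {x : List α} (hx : x ≠ []) :
    gap x <:+ insertGaps gap x := by
  obtain ⟨y, a, rfl⟩ := (List.eq_nil_or_concat x).resolve_left hx
  simpa [insertGaps_append, insertGaps] using
    (List.suffix_cons a _).trans (List.suffix_append (insertGaps gap y) _)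

theorem length_insertGaps_add_length_gap_le (gap : List α → List α) {x y : List α}
    (hpre : x <+: y) (hne : x ≠ y) :
    (insertGaps gap x).length + (gap y).length ≤ (insertGaps gap y).length := by
  obtain ⟨t, rfl⟩ := hpre
  have ht : t ≠ [] := by
    rintro rfl
    simp at hne
  rw [insertGaps_append, List.length_append]
  gcongr
  exact (gap_suffix_insertGaps (fun q => gap (x ++ q)) ht).length_le

theorem insertGaps_prefix_insertGaps_iff (gap : List α → List α) {x y : List α} :
    insertGaps gap x <+: insertGaps gap y ↔ x <+: y := by
  induction x generalizing gap y with
  | nil => simp [insertGaps]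
  | cons a x ih =>
    cases y with
    | nil => simp [insertGaps]
    | cons b y =>
      simp only [insertGaps, List.cons_prefix_cons]
      refine and_congr_right ?_
      rintro rfl
      rw [List.prefix_append_right_inj, ih]

theorem insertGaps_injective (gap : List α → List α) : Function.Injective (insertGaps gap) := by
  intro x y hxy
  have hle : x <+: y := (insertGaps_prefix_insertGaps_iff gap).1 (by rw [hxy])
  have hge : y <+: x := (insertGaps_prefix_insertGaps_iff gap).1 (by rw [hxy])
  exact antisymm_of (· <+: ·) hle hge

theorem lexLe_insertGaps_iff [LinearOrder α] (gap : List α → List α) {x y : List α} :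
    lexLe (insertGaps gap x) (insertGaps gap y) ↔ lexLe x y := by
  induction x generalizing gap y with
  | nil => simp [insertGaps, lexLe]
  | cons a x ih =>
    cases y with
    | nil => simp [insertGaps, lexLe]
    | cons b y =>
      simp only [insertGaps, lexLe_cons_cons]
      refine or_congr_right (and_congr_right ?_)
      rintro rfl
      rw [lexLe_append_left_iff, ih]

theorem lcp_insertGaps [DecidableEq α] (gap : List α → List α) (x y : List α) :
    lcp (insertGaps gap x) (insertGaps gap y) = insertGaps gap (lcp x y) := by
  induction x generalizing gap y with
  | nil => simp [insertGaps, lcp]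
  | cons a x ih =>
    cases y with
    | nil => simp [insertGaps, lcp]
    | cons b y =>
      obtain rfl | hab := eq_or_ne a b
      · simp [insertGaps, lcp, lcp_append_left, ih]
      · simp [insertGaps, lcp, hab]

end Lists

theorem listLCP_map {φ : Word → Word} (hnil : φ [] = [])
    (hlcp : ∀ x y, lcp (φ x) (φ y) = φ (lcp x y)) (l : List Word) :
    listLCP (l.map φ) = φ (listLCP l) := by
  induction l with
  | nil => exact hnil.symm
  | cons x l ih =>
    cases l with
    | nil => rfl
    | cons y l =>
      simp only [List.map_cons, listLCP] at ih ⊢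
      rw [ih, hlcp]

section Types

variable {C : List Word} {k : ℕ} {w v u : Fin k → Word}

theorem const_mem_MCAT (w : Fin k → Word) {c : Word} (hc : c ∈ C) : c ∈ MCAT C w := by
  obtain ⟨i, rfl⟩ := List.get_of_mem hc
  exact Or.inr ⟨{Fin.natAdd k i}, by simp, by simp [listLCP]⟩

theorem finite_MCAT (C : List Word) (w : Fin k → Word) : (MCAT C w).Finite := by
  refine Set.Finite.insert _ ((Set.finite_range fun I : Finset (Fin (k + C.length)) =>
    listLCP (I.toList.map (Fin.append w C.get))).subset ?_)
  rintro _ ⟨I, -, rfl⟩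
  exact ⟨I, rfl⟩

theorem MCAT_comp_eq_image {φ : Word → Word} (hnil : φ [] = [])
    (hlcp : ∀ x y, lcp (φ x) (φ y) = φ (lcp x y)) (hφC : ∀ c ∈ C, φ c = c) (w : Fin k → Word) :
    MCAT C (φ ∘ w) = φ '' MCAT C w := by
  have entries : Fin.append (φ ∘ w) C.get = φ ∘ Fin.append w C.get := by
    funext i
    refine Fin.addCases (fun i => ?_) (fun i => ?_) i
    · simp
    · simpa using (hφC _ (List.getElem_mem i.2)).symm
  have meets (I : Finset (Fin (k + C.length))) :
      listLCP (I.toList.map (Fin.append (φ ∘ w) C.get))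
        = φ (listLCP (I.toList.map (Fin.append w C.get))) := by
    rw [entries, ← List.map_map, listLCP_map hnil hlcp]
  simp only [MCAT, meets, Set.image_insert_eq, hnil]
  congr 1
  ext x
  constructor
  · rintro ⟨I, hI, rfl⟩
    exact ⟨_, ⟨I, hI, rfl⟩, rfl⟩
  · rintro ⟨_, ⟨I, hI, rfl⟩, rfl⟩
    exact ⟨I, hI, rfl⟩

theorem IsInducedIso.refl (C : List Word) (w : Fin k → Word) : IsInducedIso C w w id :=
  ⟨Set.bijOn_id _, fun _ _ _ _ => ⟨Iff.rfl, Iff.rfl⟩, fun _ _ => rfl, fun _ => rfl⟩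

theorem IsInducedIso.comp {g h : Word → Word} (hg : IsInducedIso C v u g)
    (hh : IsInducedIso C w v h) : IsInducedIso C w u (g ∘ h) := by
  obtain ⟨hbij, hord, hconst, htuple⟩ := hh
  obtain ⟨gbij, gord, gconst, gtuple⟩ := hg
  refine ⟨gbij.comp hbij, fun x hx y hy => ?_, fun c hc => ?_, fun i => ?_⟩
  · obtain ⟨hpre, hlex⟩ := hord x hx y hy
    obtain ⟨gpre, glex⟩ := gord _ (hbij.mapsTo hx) _ (hbij.mapsTo hy)
    exact ⟨hpre.trans gpre, hlex.trans glex⟩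
  · simp [hconst c hc, gconst c hc]
  · simp [htuple, gtuple]

theorem IsInducedIso.apply_eq_self {h : Word → Word} (hh : IsInducedIso C w v h) {x : Word}
    (hx : x ∈ MCAT C w) (hxC : h x ∈ C) : h x = x :=
  hh.1.injOn (const_mem_MCAT w hxC) hx (hh.2.2.1 _ hxC)

theorem isInducedIso_insertGaps {gap : Word → Word} (hgap : ∀ c ∈ C, insertGaps gap c = c)
    (w : Fin k → Word) : IsInducedIso C w (insertGaps gap ∘ w) (insertGaps gap) := by
  refine ⟨?_, fun _ _ _ _ => ⟨(insertGaps_prefix_insertGaps_iff gap).symm,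
    (lexLe_insertGaps_iff gap).symm⟩, hgap, fun _ => rfl⟩
  rw [MCAT_comp_eq_image rfl (lcp_insertGaps gap) hgap]
  exact (insertGaps_injective gap).injOn.bijOn_image

/-- The gap function that stretches a tuple away from the constants `C`: a gap of `N` zeros after
every word that is not a constant. -/
def gapOutside (C : List Word) (N : ℕ) (q : Word) : Word :=
  if q ∈ C then [] else List.replicate N 0

theorem insertGaps_gapOutside_of_mem (hC : ∀ c ∈ C, ∀ c' : Word, c' <+: c → c' ∈ C) (N : ℕ) :
    ∀ c ∈ C, insertGaps (gapOutside C N) c = c :=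
  fun c hc => insertGaps_eq_self fun q _ hq => if_pos (hC c hc q hq)

theorem IsInducedIso.stretch_insertGaps_gapOutside {h : Word → Word} (hh : IsInducedIso C w v h)
    (hC : ∀ c ∈ C, ∀ c' : Word, c' <+: c → c' ∈ C) {N : ℕ}
    (hN : ∀ x ∈ MCAT C w, x.length ≤ N) :
    Stretch C w (insertGaps (gapOutside C N) ∘ v) := by
  have fixC := insertGaps_gapOutside_of_mem hC N
  refine ⟨_, (isInducedIso_insertGaps fixC v).comp hh, fun d hd e he hde hne => ?_⟩
  have hpre : h d <+: h e := (hh.2.1 d hd e he).1.1 hde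
  by_cases heC : h e ∈ C
  · have hdC : h d ∈ C := hC _ heC _ hpre
    rw [Function.comp_apply, Function.comp_apply, fixC _ heC, fixC _ hdC,
      hh.apply_eq_self he heC, hh.apply_eq_self hd hdC]
  · have gap_length : (gapOutside C N (h e)).length = N := by simp [gapOutside, heC]
    have gap_le := length_insertGaps_add_length_gap_le (gapOutside C N) hpre
      (hh.1.injOn.ne hd he hne)
    calc e.length + (insertGaps (gapOutside C N) (h d)).length
        ≤ (gapOutside C N (h e)).length + (insertGaps (gapOutside C N) (h d)).length := by
          rw [gap_length]
          gcongr
          exact hN e he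
      _ ≤ (insertGaps (gapOutside C N) (h e)).length := by rwa [add_comm]
      _ ≤ (insertGaps (gapOutside C N) (h e)).length + d.length := Nat.le_add_right _ _

end Types

/-- Any two tuples of the same type over `C` have a common `≼*`-upper bound. -/
theorem stmt6 (C : List Word) (hC : ∀ c ∈ C, ∀ c' : Word, c' <+: c → c' ∈ C)
    {k : ℕ} (w v : Fin k → Word) (h : SameTyp C w v) :
    ∃ u : Fin k → Word, Stretch C w u ∧ Stretch C v u := by
  obtain ⟨h, hh⟩ := h
  obtain ⟨N, hN⟩ :=
    (((finite_MCAT C w).union (finite_MCAT C v)).image List.length).bddAbove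
  have length_le (x) (hx : x ∈ MCAT C w ∪ MCAT C v) : x.length ≤ N := hN ⟨x, hx, rfl⟩
  exact ⟨insertGaps (gapOutside C N) ∘ v,
    hh.stretch_insertGaps_gapOutside hC fun x hx => length_le x (Or.inl hx),
    (IsInducedIso.refl C v).stretch_insertGaps_gapOutside hC fun x hx => length_le x (Or.inr hx)⟩

end CLTL
end

section
/- Let w̄ = (w₁,…,w_k) and v̄ = (v₁,…,v_k) be tuples of words with typ(w̄) = typ(v̄) (type over the empty tuple of constants). If wᵢ is incomparable left of vᵢ and vᵢ ≼ w_j, then w_j is incomparable left of v_j and wᵢ is incomparable left of w_j. Symmetrically, if wᵢ is incomparable right of vᵢ and vᵢ ≼ w_j, then w_j is incomparable right of v_j and wᵢ is incomparable right of w_j. -/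
/-!
Being incomparable left means branching at a letter, and this persists when either word is
extended. So if `w i` is left of `v i ≼ w j`, then `w i` is left of `w j`; equality of types carries
this over to `v i` being left of `v j`, and extending `v i` to `w j` gives that `w j` is left
of `v j`.
-/

namespace CLTL

/-- A word `w` is incomparable left of `v` if `w ⊑ v` but `w` is not a prefix of `v`. -/
def IncompLeft (w v : Word) : Prop := lexLe w v ∧ ¬ w <+: v

/-- `BranchesLeft x y`: below some common prefix, `x` continues with a smaller letter than `y`.
This is "incomparable left" without the prefix clauses, over an arbitrary alphabet. -/
def BranchesLeft {α : Type*} [LT α] (x y : List α) : Prop :=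
  ∃ (p : List α) (a b : α), a < b ∧ (p ++ [a]) <+: x ∧ (p ++ [b]) <+: y

namespace BranchesLeft

variable {α : Type*} {x y x' y' : List α}

lemma mono [LT α] (h : BranchesLeft x y) (hx : x <+: x') (hy : y <+: y') :
    BranchesLeft x' y' := by
  obtain ⟨p, a, b, hab, hpx, hpy⟩ := h
  exact ⟨p, a, b, hab, hpx.trans hx, hpy.trans hy⟩

lemma irrefl [Preorder α] (x : List α) : ¬ BranchesLeft x x := by
  rintro ⟨p, a, b, hab, hpa, hpb⟩
  have hprefix : p ++ [a] <+: p ++ [b] := List.prefix_of_prefix_length_le hpa hpb (by simp)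
  have heq : p ++ [a] = p ++ [b] := hprefix.eq_of_length (by simp)
  exact hab.ne (List.append_singleton_inj.1 heq).2

lemma not_prefix [Preorder α] (h : BranchesLeft x y) : ¬ x <+: y :=
  fun hxy => irrefl y (h.mono hxy List.prefix_rfl)

end BranchesLeft

lemma incompLeft_iff_branchesLeft {x y : Word} : IncompLeft x y ↔ BranchesLeft x y :=
  ⟨fun h => h.1.resolve_left h.2, fun h => ⟨Or.inr h, h.not_prefix⟩⟩

lemma apply_mem_MCAT (C : List Word) {k : ℕ} (w : Fin k → Word) (i : Fin k) : w i ∈ MCAT C w :=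
  Or.inr ⟨{Fin.castAdd _ i}, Finset.singleton_nonempty _, by simp [listLCP]⟩

lemma SameTyp.incompLeft_iff {C : List Word} {k : ℕ} {w v : Fin k → Word} (h : SameTyp C w v)
    (i j : Fin k) : IncompLeft (w i) (w j) ↔ IncompLeft (v i) (v j) := by
  obtain ⟨f, -, hf, -, hfw⟩ := h
  obtain ⟨hprefix, hlex⟩ := hf (w i) (apply_mem_MCAT C w i) (w j) (apply_mem_MCAT C w j)
  rw [hfw, hfw] at hprefix hlex
  exact and_congr hlex (not_congr hprefix)

theorem stmt8_general {ι α : Type*} [LT α] (w v : ι → List α)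
    (h : ∀ i j, BranchesLeft (w i) (w j) → BranchesLeft (v i) (v j)) (i j : ι) :
    (BranchesLeft (w i) (v i) → v i <+: w j →
      BranchesLeft (w j) (v j) ∧ BranchesLeft (w i) (w j)) ∧
    (BranchesLeft (v i) (w i) → v i <+: w j →
      BranchesLeft (v j) (w j) ∧ BranchesLeft (w j) (w i)) := by
  constructor
  · intro hleft hprefix
    have hw : BranchesLeft (w i) (w j) := hleft.mono List.prefix_rfl hprefix
    exact ⟨(h i j hw).mono hprefix List.prefix_rfl, hw⟩
  · intro hright hprefix
    have hw : BranchesLeft (w j) (w i) := hright.mono hprefix List.prefix_rfl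
    exact ⟨(h j i hw).mono List.prefix_rfl hprefix, hw⟩

/-- If `typ(w̄) = typ(v̄)` (over the empty tuple of constants), `wᵢ` is incomparable
left (right) of `vᵢ`, and `vᵢ ≼ wⱼ`, then `wⱼ` is incomparable left (right) of `vⱼ` and
incomparable right (left) of `wᵢ`. -/
theorem stmt8 {k : ℕ} (w v : Fin k → Word) (h : SameTyp [] w v) (i j : Fin k) :
    (IncompLeft (w i) (v i) → v i <+: w j →
      IncompLeft (w j) (v j) ∧ IncompLeft (w i) (w j)) ∧
    (IncompLeft (v i) (w i) → v i <+: w j →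
      IncompLeft (v j) (w j) ∧ IncompLeft (w j) (w i)) := by
  have hvw := h.incompLeft_iff
  simp only [incompLeft_iff_branchesLeft] at hvw ⊢
  exact stmt8_general w v (fun i j => (hvw i j).1) i j

end CLTL
end
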